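/- For every positive rational number α, the real vector space of closed alternating bilinear forms on 𝔤_α, namely {ω : 𝔤_α × 𝔤_α → ℝ alternating bilinear with ω([x,y],z) + ω([y,z],x) + ω([z,x],y) = 0 for all x,y,z ∈ 𝔤_α}, has dimension 12. -/

import Mathlib

/-!
The proof solves the linear system for the components `w i j = ω (e i, e j)` of a closed form.

Evaluating the cocycle identity on triples of basis vectors gives 16 independent equations on the
28 components. When `a + 1 ≠ 0`, they express every component through the twelve free ones
`w01, w02, w03, w04, w05, w06, w07, w12, w13, w14, w16, w23`, and all the components of the form
vanish once these twelve do (`comps_eq_zero`). Hence the map reading off the free components is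
injective on `Z2 a`. It is surjective because the general solution `closedForm a c` of the system,
written as a combination of the elementary forms `wedge i j`, satisfies the cocycle identity for
all arguments (`closedForm_mem`). A positive rational `α` satisfies `α + 1 ≠ 0`, so `Z2 α` is
isomorphic to `ℝ¹²`.
-/

noncomputable section

/-- Structure constants of the Lie algebra `g_alpha` (0-indexed basis `e 0, ..., e 7`
corresponding to `e_1, ..., e_8` in the paper): `gA alpha i j` is the value of the bracket
`[e_i, e_j]` for the listed pairs with `i < j`, and `0` otherwise. -/
def gA (a : ℝ) (i j : Fin 8) : Fin 8 → ℝ :=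
  if i = 0 ∧ j = 1 then -(Pi.single 4 1 : Fin 8 → ℝ)
  else if i = 0 ∧ j = 4 then -(Pi.single 5 1 : Fin 8 → ℝ)
  else if i = 1 ∧ j = 3 then (a - 1) • (Pi.single 5 1 : Fin 8 → ℝ)
  else if i = 0 ∧ j = 3 then (1 + a) • (Pi.single 6 1 : Fin 8 → ℝ)
  else if i = 1 ∧ j = 2 then (Pi.single 6 1 : Fin 8 → ℝ)
  else if i = 1 ∧ j = 4 then -((1 + a) • (Pi.single 6 1 : Fin 8 → ℝ))
  else if i = 0 ∧ j = 5 then -(Pi.single 7 1 : Fin 8 → ℝ)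
  else if i = 1 ∧ j = 6 then -(Pi.single 7 1 : Fin 8 → ℝ)
  else if i = 2 ∧ j = 3 then -(Pi.single 7 1 : Fin 8 → ℝ)
  else if i = 3 ∧ j = 4 then (2 : ℝ) • (Pi.single 7 1 : Fin 8 → ℝ)
  else 0

/-- The skew-symmetric bilinear bracket of `g_alpha`, extended bilinearly from the
structure constants. -/
def gBr (a : ℝ) (x y : Fin 8 → ℝ) : Fin 8 → ℝ :=
  ∑ i : Fin 8, ∑ j : Fin 8, (x i * y j) • (gA a i j - gA a j i)

/-- The distinguished basis vectors `e i = e_{i+1}`. -/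
def e (i : Fin 8) : Fin 8 → ℝ := Pi.single i 1

/-- The space of closed (invariant) 2-forms on `g_alpha`: alternating bilinear forms `ω`
with `ω([x,y],z) + ω([y,z],x) + ω([z,x],y) = 0`. -/
def Z2 (a : ℝ) : Submodule ℝ (AlternatingMap ℝ (Fin 8 → ℝ) ℝ (Fin 2)) where
  carrier := {ω | ∀ x y z : Fin 8 → ℝ,
    ω ![gBr a x y, z] + ω ![gBr a y z, x] + ω ![gBr a z x, y] = 0}
  add_mem' := by
    intro u v hu hv
    simp only [Set.mem_setOf_eq] at *
    intro x y z
    simp only [AlternatingMap.add_apply]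
    linarith [hu x y z, hv x y z]
  zero_mem' := by
    simp only [Set.mem_setOf_eq]
    intro x y z
    simp
  smul_mem' := by
    intro c u hu
    simp only [Set.mem_setOf_eq] at *
    intro x y z
    simp only [AlternatingMap.smul_apply, smul_eq_mul]
    linear_combination c * hu x y z

/-- The bracket in coordinates. -/
lemma gBr_eq (a : ℝ) (x y : Fin 8 → ℝ) :
    gBr a x y = ![0, 0, 0, 0,
      -(x 0 * y 1 - x 1 * y 0),
      -(x 0 * y 4 - x 4 * y 0) + (a - 1) * (x 1 * y 3 - x 3 * y 1),
      (1 + a) * (x 0 * y 3 - x 3 * y 0) + (x 1 * y 2 - x 2 * y 1)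
        - (1 + a) * (x 1 * y 4 - x 4 * y 1),
      -(x 0 * y 5 - x 5 * y 0) - (x 1 * y 6 - x 6 * y 1) - (x 2 * y 3 - x 3 * y 2)
        + 2 * (x 3 * y 4 - x 4 * y 3)] := by
  ext k
  simp only [gBr, Fin.sum_univ_eight, gA]
  fin_cases k <;> simp <;> ring

/-- The elementary 2-form `eⁱ ∧ eʲ`, obtained by pulling back the determinant of `ℝ²` along the
projection to the coordinates `i` and `j`. -/
def wedge (i j : Fin 8) : AlternatingMap ℝ (Fin 8 → ℝ) ℝ (Fin 2) :=
  (Matrix.detRowAlternating : AlternatingMap ℝ (Fin 2 → ℝ) ℝ (Fin 2)).compLinearMap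
    (LinearMap.funLeft ℝ ℝ ![i, j])

lemma wedge_apply (i j : Fin 8) (x y : Fin 8 → ℝ) :
    wedge i j ![x, y] = x i * y j - x j * y i := by
  change Matrix.det (Matrix.of fun k l : Fin 2 => (![x, y] k) (![i, j] l)) = _
  rw [Matrix.det_fin_two]
  simp

/-- The general solution of the cocycle equations, with the values
`c 0, …, c 11` prescribed for the free components
`w01, w02, w03, w04, w05, w06, w07, w12, w13, w14, w16, w23`. -/
def closedForm (a : ℝ) (c : Fin 12 → ℝ) : AlternatingMap ℝ (Fin 8 → ℝ) ℝ (Fin 2) :=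
  c 0 • wedge 0 1 + c 1 • wedge 0 2 + c 2 • wedge 0 3 + c 3 • wedge 0 4
    + c 4 • (wedge 0 5 + (a - 1) • wedge 3 4)
    + c 5 • (wedge 0 6 + wedge 2 4 + (1 + a) • wedge 1 5)
    + c 6 • (wedge 0 7 + wedge 4 6 - (a + 3) • wedge 3 5 - (1 + a)⁻¹ • wedge 2 6)
    + c 7 • wedge 1 2 + c 8 • wedge 1 3 + c 9 • wedge 1 4
    + c 10 • (wedge 1 6 - (1 + a) • wedge 3 4) + c 11 • wedge 2 3

lemma closedForm_mem {a : ℝ} (ha : 1 + a ≠ 0) (c : Fin 12 → ℝ) : closedForm a c ∈ Z2 a := by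
  intro x y z
  simp only [closedForm, AlternatingMap.add_apply, AlternatingMap.sub_apply,
    AlternatingMap.smul_apply, wedge_apply, gBr_eq, smul_eq_mul]
  simp
  field_simp
  ring

/-- The bilinear map `(x, y) ↦ ω ![x, y]` attached to an alternating form. -/
def bil (ω : AlternatingMap ℝ (Fin 8 → ℝ) ℝ (Fin 2)) :
    (Fin 8 → ℝ) →ₗ[ℝ] (Fin 8 → ℝ) →ₗ[ℝ] ℝ :=
  LinearMap.mk₂ ℝ (fun x y => ω ![x, y])
    (fun x x' y => by simpa using ω.map_vecCons_add ![y] x x')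
    (fun c x y => by simpa using ω.map_vecCons_smul ![y] c x)
    (fun x y y' => by
      have h : ∀ t, Function.update ![x, 0] 1 t = ![x, t] := fun t => by
        ext k; fin_cases k <;> simp
      simpa only [h] using ω.map_update_add ![x, 0] 1 y y')
    (fun c x y => by
      have h : ∀ t, Function.update ![x, 0] 1 t = ![x, t] := fun t => by
        ext k; fin_cases k <;> simp
      simpa only [h] using ω.map_update_smul ![x, 0] 1 c y)

lemma bil_apply (ω : AlternatingMap ℝ (Fin 8 → ℝ) ℝ (Fin 2)) (x y : Fin 8 → ℝ) :
    bil ω x y = ω ![x, y] := rfl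

lemma bil_self (ω : AlternatingMap ℝ (Fin 8 → ℝ) ℝ (Fin 2)) (x : Fin 8 → ℝ) :
    bil ω x x = 0 :=
  ω.map_eq_zero_of_eq ![x, x] (i := 0) (j := 1) (by simp) (by decide)

lemma bil_swap (ω : AlternatingMap ℝ (Fin 8 → ℝ) ℝ (Fin 2)) (x y : Fin 8 → ℝ) :
    bil ω y x = -bil ω x y := by
  have h := bil_self ω (x + y)
  simp only [map_add, LinearMap.add_apply, bil_self] at h
  linarith

lemma gBr_e (a : ℝ) (i j : Fin 8) : gBr a (e i) (e j) = gA a i j - gA a j i := by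
  simp [gBr, e, Pi.single_apply]

/-- The cocycle identity on basis vectors, in terms of the structure constants. -/
lemma cocycle_e {a : ℝ} {ω : AlternatingMap ℝ (Fin 8 → ℝ) ℝ (Fin 2)} (hω : ω ∈ Z2 a)
    (i j k : Fin 8) :
    bil ω (gA a i j - gA a j i) (e k) + bil ω (gA a j k - gA a k j) (e i)
      + bil ω (gA a k i - gA a i k) (e j) = 0 := by
  have h := hω (e i) (e j) (e k)
  simpa only [gBr_e, ← bil_apply] using h

/-- A closed form whose twelve free components vanish is zero. -/
lemma comps_eq_zero {a : ℝ} (ha : 1 + a ≠ 0)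
    {ω : AlternatingMap ℝ (Fin 8 → ℝ) ℝ (Fin 2)} (hω : ω ∈ Z2 a)
    (h01 : bil ω (e 0) (e 1) = 0) (h02 : bil ω (e 0) (e 2) = 0) (h03 : bil ω (e 0) (e 3) = 0)
    (h04 : bil ω (e 0) (e 4) = 0) (h05 : bil ω (e 0) (e 5) = 0) (h06 : bil ω (e 0) (e 6) = 0)
    (h07 : bil ω (e 0) (e 7) = 0) (h12 : bil ω (e 1) (e 2) = 0) (h13 : bil ω (e 1) (e 3) = 0)
    (h14 : bil ω (e 1) (e 4) = 0) (h16 : bil ω (e 1) (e 6) = 0) (h23 : bil ω (e 2) (e 3) = 0) :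
    ω = 0 := by
  have cE := cocycle_e hω
  have E012 := cE 0 1 2
  have E013 := cE 0 1 3
  have E014 := cE 0 1 4
  have E015 := cE 0 1 5
  have E016 := cE 0 1 6
  have E017 := cE 0 1 7
  have E023 := cE 0 2 3
  have E024 := cE 0 2 4
  have E025 := cE 0 2 5
  have E034 := cE 0 3 4
  have E035 := cE 0 3 5
  have E046 := cE 0 4 6
  have E047 := cE 0 4 7
  have E056 := cE 0 5 6
  have E123 := cE 1 2 3
  have E134 := cE 1 3 4
  have s : ∀ i : Fin 8, (Pi.single i 1 : Fin 8 → ℝ) = e i := fun _ => rfl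
  simp [gA, s] at E012 E013 E014 E015 E016 E017 E023 E024 E025 E034 E035 E046 E047 E056 E123 E134
  have sw := fun i j : Fin 8 => bil_swap ω (e i) (e j)
  rw [sw 0 6] at E012 E014
  rw [sw 2 4] at E012
  rw [sw 3 4, sw 0 5, sw 1 6] at E013
  rw [bil_self, sw 1 5] at E014
  rw [sw 1 7] at E015 E123 E134
  rw [sw 0 7] at E016 E023 E034
  rw [sw 2 6] at E023
  rw [sw 2 5] at E024 E123
  rw [sw 2 7] at E025
  rw [sw 4 6, sw 3 5] at E034
  rw [sw 5 6, sw 3 7] at E035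
  rw [sw 6 7] at E056
  rw [sw 3 6] at E123 E134
  rw [sw 4 5] at E134
  have h24 : bil ω (e 2) (e 4) = 0 := by linarith
  have h34 : bil ω (e 3) (e 4) = 0 := by rw [h05, h16] at E013; linarith
  have h15 : bil ω (e 1) (e 5) = 0 := by rw [h06] at E014; linarith
  have h46 : bil ω (e 4) (e 6) = 0 := by linarith
  have h25 : bil ω (e 2) (e 5) = 0 := by linarith
  have h27 : bil ω (e 2) (e 7) = 0 := by linarith
  have h67 : bil ω (e 6) (e 7) = 0 := by linarith
  have h26 : bil ω (e 2) (e 6) = 0 := by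
    refine (mul_eq_zero.mp ?_).resolve_left ha
    linarith
  have h35 : bil ω (e 3) (e 5) = 0 := by rw [h46] at E034; linarith
  have h37 : bil ω (e 3) (e 7) = 0 := by rw [E046] at E035; linarith
  -- `w45 = -w17` and `w36 = w17` turn the remaining equation into `4 * w17 = 0`.
  have h36 : bil ω (e 3) (e 6) = bil ω (e 1) (e 7) := by rw [h25] at E123; linarith
  have h45 : bil ω (e 4) (e 5) = -bil ω (e 1) (e 7) := by linarith
  have h17 : bil ω (e 1) (e 7) = 0 := by rw [h36, h45] at E134; linarith
  rw [h17] at h36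
  rw [h17, neg_zero] at h45
  have up : ∀ i j : Fin 8, i < j → bil ω (e i) (e j) = 0 := by
    intro i j hij
    fin_cases i <;> fin_cases j <;> first | exact absurd hij (by decide) | assumption
  have hb : bil ω = 0 := by
    refine (Pi.basisFun ℝ (Fin 8)).ext fun i => (Pi.basisFun ℝ (Fin 8)).ext fun j => ?_
    simp only [Pi.basisFun_apply, s, LinearMap.zero_apply]
    rcases lt_trichotomy i j with h | rfl | h
    · exact up i j h
    · exact bil_self ω _
    · rw [sw, up j i h, neg_zero]
  ext v
  have hv : v = ![v 0, v 1] := by ext k; fin_cases k <;> rfl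
  rw [hv, ← bil_apply, hb]
  rfl

/-- The twelve free components of a closed form. -/
def freeComps (a : ℝ) : Z2 a →ₗ[ℝ] (Fin 12 → ℝ) where
  toFun ω := ![ω.1 ![e 0, e 1], ω.1 ![e 0, e 2], ω.1 ![e 0, e 3], ω.1 ![e 0, e 4],
    ω.1 ![e 0, e 5], ω.1 ![e 0, e 6], ω.1 ![e 0, e 7], ω.1 ![e 1, e 2], ω.1 ![e 1, e 3],
    ω.1 ![e 1, e 4], ω.1 ![e 1, e 6], ω.1 ![e 2, e 3]]
  map_add' ω η := by simp
  map_smul' c ω := by simp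

lemma freeComps_injective {a : ℝ} (ha : 1 + a ≠ 0) : Function.Injective (freeComps a) := by
  rw [injective_iff_map_eq_zero]
  rintro ⟨ω, hω⟩ h
  have H : ∀ k, freeComps a ⟨ω, hω⟩ k = 0 := fun k => by rw [h]; rfl
  exact Subtype.ext (comps_eq_zero ha hω (H 0) (H 1) (H 2) (H 3) (H 4) (H 5) (H 6) (H 7) (H 8)
    (H 9) (H 10) (H 11))

set_option maxHeartbeats 2000000 in
lemma freeComps_surjective {a : ℝ} (ha : 1 + a ≠ 0) : Function.Surjective (freeComps a) := by
  intro c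
  refine ⟨⟨closedForm a c, closedForm_mem ha c⟩, ?_⟩
  ext k
  fin_cases k <;> simp [freeComps, closedForm, wedge_apply, e]

/-- the space of closed alternating bilinear forms on `g_alpha` has
dimension 12. -/
theorem statement7 (α : ℚ) (hα : 0 < α) :
    Module.finrank ℝ (Z2 (α : ℝ)) = 12 := by
  have ha : (1 + α : ℝ) ≠ 0 := by
    have : (0 : ℝ) < α := by exact_mod_cast hα
    positivity
  rw [(LinearEquiv.ofBijective (freeComps (α : ℝ))
    ⟨freeComps_injective ha, freeComps_surjective ha⟩).finrank_eq]
  simp
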